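/- The Poincaré polynomial R_G(t,q) = Σ_i t^i · qdim(H^i(G)) is multiplicative under disjoint union: R_{G₁⊔G₂}(t,q) = R_{G₁}(t,q) · R_{G₂}(t,q). -/

import Mathlib

/-- A finite multigraph (possibly with loops and multiple edges), with
vertex type `V` and edges indexed by `Fin n`, edge `e` having endpoints `ends e`. -/
structure OGraph where
  V : Type
  [finV : Fintype V]
  n : ℕ
  ends : Fin n → Sym2 V

attribute [instance] OGraph.finV

namespace OGraph

variable (G : OGraph)

/-- Two vertices are related if some edge in `s` joins them. -/
def rel (s : Finset (Fin G.n)) (u v : G.V) : Prop := ∃ e ∈ s, G.ends e = s(u, v)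

/-- The set of connected components of the spanning subgraph `[G:s]`. -/
def Comp (s : Finset (Fin G.n)) : Type := Quot (G.rel s)

/-- `k(s)`: the number of connected components of the spanning subgraph `[G:s]`. -/
noncomputable def ncomp (s : Finset (Fin G.n)) : ℕ := Nat.card (G.Comp s)

/-- The number of proper colorings of `G` with `m` colors: the value `P_G(m)` of
the chromatic polynomial at the natural number `m`. -/
noncomputable def chromatic (m : ℕ) : ℕ :=
  Nat.card {c : G.V → Fin m // ∀ e u v, G.ends e = s(u, v) → c u ≠ c v}

end OGraph

namespace OGraph

/-- The map on quotients induced by an implication of relations. -/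
def qmap {V : Type} {r r' : V → V → Prop} (h : ∀ u v, r u v → r' u v) :
    Quot r → Quot r' :=
  Quot.lift (Quot.mk r') fun u v huv => Quot.sound (h u v huv)

variable (G : OGraph)

/-- An enhanced state: a subset `s` of the edges together with an assignment of a
color (`1` or `x`; a component is "colored `x`" when the predicate holds) to each
connected component of the spanning subgraph `[G:s]`. -/
abbrev EState := Σ s : Finset (Fin G.n), (G.Comp s → Prop)

/-- `j(S)`: the number of components colored `x` in the enhanced state `S`. -/
noncomputable def jdeg (S : G.EState) : ℕ := Nat.card {k : G.Comp S.1 // S.2 k}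

open Classical in
/-- The enhanced state(s) obtained from `S` by adding the edge `e`: zero if `e`
already belongs to `S` or if the added edge merges two components both colored `x`
(the product `x∗x = 0`); otherwise the enhanced state on `insert e s` whose
coloring is obtained from that of `S` using the product
`1∗1 = 1`, `1∗x = x∗1 = x`. -/
noncomputable def addEdge (S : G.EState) (e : Fin G.n) : G.EState →₀ ℤ :=
  if e ∈ S.1 then 0
  else
    let p : G.Comp S.1 → G.Comp (insert e S.1) :=
      qmap fun _ _ huv => huv.elim fun f hf => ⟨f, Finset.mem_insert_of_mem hf.1, hf.2⟩
    if ∃ k1 k2 : G.Comp S.1, k1 ≠ k2 ∧ p k1 = p k2 ∧ S.2 k1 ∧ S.2 k2 then 0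
    else Finsupp.single ⟨insert e S.1, fun K => ∃ k, p k = K ∧ S.2 k⟩ 1

/-- The differential applied to a single enhanced state: the signed sum, over all
edges `e` not in `S`, of the states obtained by adding `e`; the sign is `(-1)^{n(e)}`
where `n(e)` is the number of edges of `S` ordered before `e`. -/
noncomputable def dState (S : G.EState) : G.EState →₀ ℤ :=
  ∑ e : Fin G.n, ((-1 : ℤ) ^ (S.1.filter fun f => f < e).card) • G.addEdge S e

/-- The differential of the graph cohomology complex, as a linear endomorphism of
the free `ℤ`-module generated by all enhanced states. -/
noncomputable def diff : (G.EState →₀ ℤ) →ₗ[ℤ] (G.EState →₀ ℤ) :=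
  Finsupp.lsum ℤ fun S => LinearMap.toSpanSingleton ℤ _ (G.dState S)

/-- The chain group `C^{i,j}(G)`: the free `ℤ`-module spanned by the enhanced
states with `i` edges and `j` components colored `x`, as a submodule of the free
module on all enhanced states. -/
noncomputable def Cmod (i j : ℕ) : Submodule ℤ (G.EState →₀ ℤ) :=
  Finsupp.supported ℤ ℤ {S : G.EState | S.1.card = i ∧ G.jdeg S = j}

/-- The cocycles of bidegree `(i,j)`. -/
noncomputable def Zmod (i j : ℕ) : Submodule ℤ (G.EState →₀ ℤ) :=
  LinearMap.ker G.diff ⊓ G.Cmod i j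

/-- The coboundaries: `0` for `i = 0`, the image of `C^{i,j}` for `i + 1`. -/
noncomputable def Bmod : ℕ → ℕ → Submodule ℤ (G.EState →₀ ℤ)
  | 0, _ => ⊥
  | i + 1, j => Submodule.map G.diff (G.Cmod i j)

/-- The graph cohomology group `H^{i,j}(G)` (cocycles modulo coboundaries in
bidegree `(i,j)`). -/
noncomputable def Hmod (i j : ℕ) : Type :=
  (G.Zmod i j).toAddSubgroup ⧸
    (AddSubgroup.comap (G.Zmod i j).toAddSubgroup.subtype (G.Bmod i j).toAddSubgroup)

noncomputable instance (i j : ℕ) : AddCommGroup (G.Hmod i j) := by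
  delta Hmod; infer_instance

end OGraph

namespace OGraph

variable (G : OGraph)

/-- The chain group `C^i(G)`: the free `ℤ`-module spanned by the enhanced states
with `i` edges. -/
noncomputable def CmodU (i : ℕ) : Submodule ℤ (G.EState →₀ ℤ) :=
  Finsupp.supported ℤ ℤ {S : G.EState | S.1.card = i}

/-- The cocycles of degree `i`. -/
noncomputable def ZmodU (i : ℕ) : Submodule ℤ (G.EState →₀ ℤ) :=
  LinearMap.ker G.diff ⊓ G.CmodU i

/-- The coboundaries: `0` for `i = 0`, the image of `C^i` for `i + 1`. -/
noncomputable def BmodU : ℕ → Submodule ℤ (G.EState →₀ ℤ)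
  | 0 => ⊥
  | i + 1 => Submodule.map G.diff (G.CmodU i)

/-- The graph cohomology group `H^i(G)`. -/
noncomputable def HmodU (i : ℕ) : Type :=
  (G.ZmodU i).toAddSubgroup ⧸
    (AddSubgroup.comap (G.ZmodU i).toAddSubgroup.subtype (G.BmodU i).toAddSubgroup)

noncomputable instance (i : ℕ) : AddCommGroup (G.HmodU i) := by
  delta HmodU; infer_instance

/-- The disjoint union `G₁ ⊔ G₂` of two graphs, with the edges of `G₁` ordered
before those of `G₂`. -/
noncomputable def disj (G₁ G₂ : OGraph) : OGraph :=
  ⟨G₁.V ⊕ G₂.V, G₁.n + G₂.n,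
    fun k => (finSumFinEquiv.symm k).elim
      (fun a => (G₁.ends a).map Sum.inl) (fun b => (G₂.ends b).map Sum.inr)⟩

end OGraph

namespace OGraph

/-- The graded dimension `Σ_j q^j · rank H^{i,j}(G)` of the `i`-th graph
cohomology group. -/
noncomputable def qdimH (G : OGraph) (i : ℕ) : PowerSeries ℤ :=
  PowerSeries.mk fun j => (Module.finrank ℤ (G.Hmod i j) : ℤ)

/-- The Poincaré polynomial `R_G(t,q) = Σ_i t^i · qdim H^i(G)`, as a polynomial in
`t` with coefficients power series in `q`. -/
noncomputable def Rpoly (G : OGraph) : Polynomial (PowerSeries ℤ) :=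
  ∑ i ∈ Finset.range (G.n + 1), Polynomial.C (G.qdimH i) * Polynomial.X ^ i

end OGraph

/-! Over `ℚ`, choose a generalized inverse `h` of the differential `D` (so `D h D = D`) that lowers
the number of edges by one and preserves the number of `x`-colored components. Then `D h` and `h D`
are idempotents with the ranks of `D` in adjacent degrees, so the rank of `H^{i,j}` is the trace of
`P = 1 - D h - h D` in bidegree `(i, j)`. The states of a disjoint union are the pairs of states,
and since the edges of `G₁` precede those of `G₂`, its differential is the tensor product
differential `D ⊗ 1 + ε ⊗ D'`, where `ε` is the sign `(-1) ^ i`. Its generalized inverse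
`h ⊗ 1 + ε P ⊗ h'` has defect `P ⊗ P'`, and traces of tensor products multiply. -/

section HomotopyDefect

variable {R S : Type*} [Ring R] [Ring S]

/-- The failure `1 - d h - h d` of `h` to be a contracting homotopy for the differential `d`. -/
def homotopyDefect (d h : R) : R := 1 - d * h - h * d

/-- `h` is a generalized inverse of the square-zero element `d`. Then `d h` and `h d` are
idempotents, and `homotopyDefect d h` projects the cocycles of `d` onto a complement of the
coboundaries. -/
structure IsSplitting (d h : R) : Prop where
  mul_self : d * d = 0
  mul_mul : d * h * d = d

theorem map_homotopyDefect {F : Type*} [FunLike F R S] [RingHomClass F R S] (f : F) (d h : R) :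
    f (homotopyDefect d h) = homotopyDefect (f d) (f h) := by
  simp only [homotopyDefect, map_sub, map_one, map_mul]

variable {d h ε : R}

theorem IsSplitting.map {F : Type*} [FunLike F R S] [RingHomClass F R S] (f : F)
    (hs : IsSplitting d h) : IsSplitting (f d) (f h) :=
  ⟨by rw [← map_mul, hs.mul_self, map_zero], by rw [← map_mul, ← map_mul, hs.mul_mul]⟩

theorem IsSplitting.mul_homotopyDefect (hs : IsSplitting d h) : d * homotopyDefect d h = 0 := by
  rw [homotopyDefect, mul_sub, mul_sub, mul_one, ← mul_assoc, ← mul_assoc, hs.mul_mul,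
    hs.mul_self, zero_mul, sub_zero, sub_self]

theorem IsSplitting.homotopyDefect_mul (hs : IsSplitting d h) : homotopyDefect d h * d = 0 := by
  rw [homotopyDefect, sub_mul, sub_mul, one_mul, hs.mul_mul, mul_assoc, hs.mul_self, mul_zero,
    sub_self, sub_zero]

theorem isSplitting_of_homotopyDefect_mul (hdd : d * d = 0)
    (hPd : homotopyDefect d h * d = 0) : IsSplitting d h := by
  rw [homotopyDefect, sub_mul, sub_mul, one_mul, mul_assoc h, hdd, mul_zero, sub_zero] at hPd
  exact ⟨hdd, (sub_eq_zero.1 hPd).symm⟩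

theorem commute_homotopyDefect_of_anticomm (hdε : d * ε = -(ε * d)) (hhε : h * ε = -(ε * h)) :
    Commute (homotopyDefect d h) ε := by
  have hdh : Commute (d * h) ε := by
    rw [Commute, SemiconjBy, mul_assoc, hhε, mul_neg, ← mul_assoc, hdε, neg_mul, neg_neg, mul_assoc]
  have hhd : Commute (h * d) ε := by
    rw [Commute, SemiconjBy, mul_assoc, hdε, mul_neg, ← mul_assoc, hhε, neg_mul, neg_neg, mul_assoc]
  exact ((Commute.one_left ε).sub_left hdh).sub_left hhd

end HomotopyDefect

section TensorProduct

open scoped TensorProduct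
open Algebra.TensorProduct (tmul_mul_tmul one_def)

variable (K : Type*) {A B : Type*} [CommRing K] [Ring A] [Ring B] [Algebra K A] [Algebra K B]
  {d' h' : B} {ε d h : A}

/-- The differential `d ⊗ 1 + ε ⊗ d'` of a tensor product of complexes, where `ε` is the sign
operator of the first factor. -/
def tensorDifferential (ε d : A) (d' : B) : A ⊗[K] B := d ⊗ₜ 1 + ε ⊗ₜ d'

theorem tensorDifferential_mul_self (hdd : d * d = 0) (hd'd' : d' * d' = 0)
    (hdε : d * ε = -(ε * d)) :
    tensorDifferential K ε d d' * tensorDifferential K ε d d' = 0 := by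
  simp only [tensorDifferential, add_mul, mul_add, tmul_mul_tmul, mul_one, one_mul, hdd, hd'd',
    hdε, TensorProduct.zero_tmul, TensorProduct.tmul_zero, TensorProduct.neg_tmul]
  abel

/-- The homotopy `h ⊗ 1 + ε P ⊗ h'`, with `P = homotopyDefect d h`, which contracts the first
factor onto the image of `P` and then the second factor. -/
def tensorHomotopy (ε d h : A) (h' : B) : A ⊗[K] B := h ⊗ₜ 1 + (ε * homotopyDefect d h) ⊗ₜ h'

theorem IsSplitting.homotopyDefect_tensor (hs : IsSplitting d h) (hεε : ε * ε = 1)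
    (hdε : d * ε = -(ε * d)) (hhε : h * ε = -(ε * h)) :
    homotopyDefect (tensorDifferential K ε d d') (tensorHomotopy K ε d h h') =
      homotopyDefect d h ⊗ₜ[K] homotopyDefect d' h' := by
  set P := homotopyDefect d h with hP
  have hdεP : d * (ε * P) = 0 := by
    rw [← mul_assoc, hdε, neg_mul, mul_assoc, hs.mul_homotopyDefect, mul_zero, neg_zero]
  have hεPd : ε * P * d = 0 := by rw [mul_assoc, hs.homotopyDefect_mul, mul_zero]
  have hεεP : ε * (ε * P) = P := by rw [← mul_assoc, hεε, one_mul]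
  have hεPε : ε * P * ε = P := by
    rw [mul_assoc, (commute_homotopyDefect_of_anticomm hdε hhε).eq, hεεP]
  have hDH : tensorDifferential K ε d d' * tensorHomotopy K ε d h h' =
      (d * h) ⊗ₜ 1 + (ε * h) ⊗ₜ d' + P ⊗ₜ (d' * h') := by
    simp only [tensorDifferential, tensorHomotopy, ← hP, add_mul, mul_add, tmul_mul_tmul, mul_one,
      one_mul, hdεP, hεεP, TensorProduct.zero_tmul, zero_add, add_assoc]
  have hHD : tensorHomotopy K ε d h h' * tensorDifferential K ε d d' =
      (h * d) ⊗ₜ 1 - (ε * h) ⊗ₜ d' + P ⊗ₜ (h' * d') := by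
    simp only [tensorDifferential, tensorHomotopy, ← hP, add_mul, mul_add, tmul_mul_tmul, mul_one,
      one_mul, hεPd, hεPε, hhε, TensorProduct.zero_tmul, TensorProduct.neg_tmul]
    abel
  have hPone : P ⊗ₜ[K] (1 : B) = 1 - (d * h) ⊗ₜ 1 - (h * d) ⊗ₜ 1 := by
    rw [hP, homotopyDefect, TensorProduct.sub_tmul, TensorProduct.sub_tmul, one_def]
  rw [homotopyDefect, hDH, hHD, homotopyDefect, TensorProduct.tmul_sub, TensorProduct.tmul_sub,
    hPone]
  abel

theorem IsSplitting.tensor (hs : IsSplitting d h) (hs' : IsSplitting d' h') (hεε : ε * ε = 1)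
    (hdε : d * ε = -(ε * d)) (hhε : h * ε = -(ε * h)) :
    IsSplitting (tensorDifferential K ε d d') (tensorHomotopy K ε d h h') := by
  refine isSplitting_of_homotopyDefect_mul
    (tensorDifferential_mul_self K hs.mul_self hs'.mul_self hdε) ?_
  rw [hs.homotopyDefect_tensor K hεε hdε hhε, tensorDifferential, mul_add, tmul_mul_tmul,
    tmul_mul_tmul, hs.homotopyDefect_mul, hs'.homotopyDefect_mul, TensorProduct.zero_tmul,
    TensorProduct.tmul_zero, add_zero]

end TensorProduct

section GeneralizedInverse

variable {K : Type*} [Field K]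

theorem exists_linearMap_generalizedInverse {V W : Type*} [AddCommGroup V] [Module K V]
    [AddCommGroup W] [Module K W] (f : V →ₗ[K] W) : ∃ g : W →ₗ[K] V, f ∘ₗ g ∘ₗ f = f := by
  obtain ⟨s, hs⟩ := f.rangeRestrict.exists_rightInverse_of_surjective f.range_rangeRestrict
  obtain ⟨g, hg⟩ := s.exists_extend
  refine ⟨g, LinearMap.ext fun x => ?_⟩
  have hgf : g (f x) = s (f.rangeRestrict x) := LinearMap.congr_fun hg (f.rangeRestrict x)
  rw [LinearMap.comp_apply, LinearMap.comp_apply, hgf]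
  exact congrArg Subtype.val (LinearMap.congr_fun hs (f.rangeRestrict x))

theorem exists_matrix_generalizedInverse {m n : Type*} [Fintype m] [Fintype n]
    (A : Matrix m n K) : ∃ B : Matrix n m K, A * B * A = A := by
  classical
  obtain ⟨g, hg⟩ := exists_linearMap_generalizedInverse A.toLin'
  refine ⟨LinearMap.toMatrix' g, Matrix.toLin'.injective ?_⟩
  rw [Matrix.toLin'_mul, Matrix.toLin'_mul, Matrix.toLin'_toMatrix', LinearMap.comp_assoc, hg]

theorem trace_eq_rank_of_isIdempotentElem {n : Type*} [Fintype n] {A : Matrix n n K}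
    (hA : IsIdempotentElem A) : A.trace = A.rank := by
  classical
  have hproj : IsIdempotentElem A.toLin' := by
    rw [IsIdempotentElem, Module.End.mul_eq_comp, ← Matrix.toLin'_mul, hA.eq]
  rw [← Matrix.trace_toLin'_eq, (LinearMap.IsIdempotentElem.isProj_range _ hproj).trace]
  rfl

end GeneralizedInverse

section DegreeProjection

variable {ι M K : Type*} [DecidableEq ι] [DecidableEq M] [CommRing K]

/-- The projection onto the span of the basis vectors of degree `m`. -/
def degreeProjection (deg : ι → M) (m : M) : Matrix ι ι K :=
  Matrix.diagonal fun i => if deg i = m then 1 else 0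

variable [Fintype ι] (deg : ι → M) (m : M)

theorem isIdempotentElem_degreeProjection :
    IsIdempotentElem (degreeProjection deg m : Matrix ι ι K) := by
  simp only [IsIdempotentElem, degreeProjection, Matrix.diagonal_mul_diagonal, mul_ite, mul_one,
    mul_zero, ← ite_and, and_self]

theorem trace_mul_degreeProjection (A : Matrix ι ι K) :
    (A * degreeProjection deg m).trace = ∑ i, if deg i = m then A i i else 0 := by
  simp [Matrix.trace, degreeProjection, Matrix.mul_diagonal]

end DegreeProjection

section Homogeneous

variable {ι M K : Type*} [AddCommGroup M] {deg : ι → M} {α β δ : M}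

/-- The entries of `A` vanish outside the positions `(i, j)` with `deg i = deg j + α`: as a linear
map, `A` raises the degree by `α`. -/
def IsHomogeneousMatrix [Zero K] (deg : ι → M) (α : M) (A : Matrix ι ι K) : Prop :=
  ∀ ⦃i j⦄, A i j ≠ 0 → deg i = deg j + α

namespace IsHomogeneousMatrix

variable [CommRing K]

theorem diagonal [DecidableEq ι] (c : ι → K) :
    IsHomogeneousMatrix deg 0 (Matrix.diagonal c) := by
  intro i j hij
  obtain rfl : i = j := by
    by_contra hne
    exact hij (Matrix.diagonal_apply_ne c hne)
  rw [add_zero]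

theorem one [DecidableEq ι] : IsHomogeneousMatrix deg 0 (1 : Matrix ι ι K) :=
  diagonal 1

variable {A B : Matrix ι ι K}

theorem add (hA : IsHomogeneousMatrix deg α A) (hB : IsHomogeneousMatrix deg α B) :
    IsHomogeneousMatrix deg α (A + B) := by
  intro i j hij
  by_cases hAij : A i j = 0
  · exact hB fun hBij => hij (by rw [Matrix.add_apply, hAij, hBij, add_zero])
  · exact hA hAij

theorem neg (hA : IsHomogeneousMatrix deg α A) : IsHomogeneousMatrix deg α (-A) :=
  fun _ _ hij => hA (neg_ne_zero.1 hij)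

theorem sub (hA : IsHomogeneousMatrix deg α A) (hB : IsHomogeneousMatrix deg α B) :
    IsHomogeneousMatrix deg α (A - B) :=
  sub_eq_add_neg A B ▸ hA.add hB.neg

theorem mul [Fintype ι] (hA : IsHomogeneousMatrix deg α A) (hB : IsHomogeneousMatrix deg β B) :
    IsHomogeneousMatrix deg (α + β) (A * B) := by
  intro i j hij
  obtain ⟨k, -, hk⟩ := Finset.exists_ne_zero_of_sum_ne_zero hij
  rw [hA (left_ne_zero_of_mul hk), hB (right_ne_zero_of_mul hk), add_assoc, add_comm β]

theorem homotopyDefect [Fintype ι] [DecidableEq ι] (hA : IsHomogeneousMatrix deg α A)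
    (hB : IsHomogeneousMatrix deg (-α) B) :
    IsHomogeneousMatrix deg 0 (homotopyDefect A B) :=
  (one.sub (add_neg_cancel α ▸ hA.mul hB)).sub (neg_add_cancel α ▸ hB.mul hA)

theorem mul_diagonal_eq_neg [Fintype ι] [DecidableEq ι] {χ : M → K}
    (hA : IsHomogeneousMatrix deg α A) (hχ : ∀ m, χ (m + α) = -χ m) :
    A * Matrix.diagonal (χ ∘ deg) = -(Matrix.diagonal (χ ∘ deg) * A) := by
  ext i j
  rw [Matrix.mul_diagonal, Matrix.neg_apply, Matrix.diagonal_mul]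
  by_cases hij : A i j = 0
  · rw [hij, zero_mul, mul_zero, neg_zero]
  · rw [Function.comp_apply, Function.comp_apply, hA hij, hχ, neg_mul, neg_neg, mul_comm]

end IsHomogeneousMatrix

section HomogeneousPart

variable [DecidableEq M]

/-- The component of the matrix `A` that raises the degree by `α`. -/
def homogeneousPart [Zero K] (deg : ι → M) (α : M) (A : Matrix ι ι K) :
    Matrix ι ι K :=
  Matrix.of fun i j => if deg i = deg j + α then A i j else 0

theorem isHomogeneousMatrix_homogeneousPart [Zero K] (deg : ι → M) (α : M) (A : Matrix ι ι K) :
    IsHomogeneousMatrix deg α (homogeneousPart deg α A) :=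
  fun _ _ hij => (ite_ne_right_iff.1 hij).1

theorem IsHomogeneousMatrix.homogeneousPart_eq [Zero K] {A : Matrix ι ι K}
    (hA : IsHomogeneousMatrix deg α A) : homogeneousPart deg α A = A := by
  ext i j
  exact ite_eq_left_iff.2 fun hij => (not_imp_comm.1 (@hA i j) hij).symm

variable [Fintype ι] [CommRing K] {A B : Matrix ι ι K}

theorem IsHomogeneousMatrix.mul_homogeneousPart (hA : IsHomogeneousMatrix deg α A)
    (B : Matrix ι ι K) : A * homogeneousPart deg β B = homogeneousPart deg (α + β) (A * B) := by
  ext i j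
  simp only [homogeneousPart, Matrix.mul_apply, Matrix.of_apply, Finset.ite_sum_zero]
  refine Finset.sum_congr rfl fun k _ => ?_
  by_cases hik : A i k = 0
  · simp only [hik, zero_mul, ite_self]
  · simp only [hA hik, add_comm α, ← add_assoc, add_left_inj, mul_ite, mul_zero]

theorem IsHomogeneousMatrix.homogeneousPart_mul (hB : IsHomogeneousMatrix deg β B)
    (A : Matrix ι ι K) : homogeneousPart deg α A * B = homogeneousPart deg (α + β) (A * B) := by
  ext i j
  simp only [homogeneousPart, Matrix.mul_apply, Matrix.of_apply, Finset.ite_sum_zero]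
  refine Finset.sum_congr rfl fun k _ => ?_
  by_cases hkj : B k j = 0
  · simp only [hkj, mul_zero, ite_self]
  · simp only [hB hkj, add_assoc, add_comm α, ite_mul, zero_mul]

end HomogeneousPart

variable [Fintype ι] [DecidableEq ι]

theorem IsHomogeneousMatrix.exists_isSplitting [Field K] {D : Matrix ι ι K}
    (hD : IsHomogeneousMatrix deg δ D) (hDD : D * D = 0) :
    ∃ h, IsHomogeneousMatrix deg (-δ) h ∧ IsSplitting D h := by
  classical
  obtain ⟨B, hB⟩ := exists_matrix_generalizedInverse D
  -- The degree `δ` part of `D * B * D = D` only involves the degree `-δ` part of `B`.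
  refine ⟨homogeneousPart deg (-δ) B, isHomogeneousMatrix_homogeneousPart _ _ _, hDD, ?_⟩
  rw [hD.mul_homogeneousPart, hD.homogeneousPart_mul, hB, add_neg_cancel, zero_add,
    hD.homogeneousPart_eq]

variable [DecidableEq M]

theorem IsHomogeneousMatrix.mul_degreeProjection [CommRing K] {A : Matrix ι ι K}
    (hA : IsHomogeneousMatrix deg α A) (m : M) :
    A * degreeProjection deg m = degreeProjection deg (m + α) * A := by
  ext i j
  rw [degreeProjection, degreeProjection, Matrix.mul_diagonal, Matrix.diagonal_mul]
  by_cases hij : A i j = 0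
  · rw [hij, zero_mul, mul_zero]
  · simp only [hA hij, add_left_inj, mul_ite, ite_mul, mul_one, one_mul, mul_zero, zero_mul]

variable [Field K] {D h : Matrix ι ι K}

theorem IsSplitting.trace_homotopy_mul_differential (hs : IsSplitting D h)
    (hD : IsHomogeneousMatrix deg δ D) (hh : IsHomogeneousMatrix deg (-δ) h) (m : M) :
    (h * D * degreeProjection deg m).trace = ((D * degreeProjection deg m).rank : K) := by
  set E : Matrix ι ι K := degreeProjection deg m
  have hEE : E * E = E := isIdempotentElem_degreeProjection deg m
  have hcomm : h * D * E = E * (h * D) := by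
    simpa using (hh.mul hD).mul_degreeProjection m
  have hidem : IsIdempotentElem (h * D * E) := by
    calc h * D * E * (h * D * E) = h * D * (E * (h * D)) * E := by simp only [mul_assoc]
      _ = h * (D * h * D) * (E * E) := by rw [← hcomm]; simp only [mul_assoc]
      _ = h * D * E := by rw [hs.mul_mul, hEE]
  rw [trace_eq_rank_of_isIdempotentElem hidem]
  congr 1
  apply le_antisymm
  · rw [mul_assoc]
    exact Matrix.rank_mul_le_right _ _
  · calc (D * E).rank = (D * (h * D * E)).rank := by
          rw [← mul_assoc, ← mul_assoc, hs.mul_mul]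
      _ ≤ (h * D * E).rank := Matrix.rank_mul_le_right _ _

theorem IsSplitting.trace_differential_mul_homotopy (hs : IsSplitting D h)
    (hD : IsHomogeneousMatrix deg δ D) (hh : IsHomogeneousMatrix deg (-δ) h) (m : M) :
    (D * h * degreeProjection deg m).trace = ((D * degreeProjection deg (m - δ)).rank : K) := by
  rw [mul_assoc, hh.mul_degreeProjection, ← sub_eq_add_neg, ← mul_assoc, Matrix.trace_mul_comm,
    ← mul_assoc, hs.trace_homotopy_mul_differential hD hh]

end Homogeneous

section TensorMatrices

open scoped TensorProduct

variable {ι ι' κ M K : Type*} [Fintype ι] [Fintype ι'] [Fintype κ] [DecidableEq ι]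
  [DecidableEq ι'] [DecidableEq κ]

/-- The algebra isomorphism sending `A ⊗ B` to the Kronecker product of `A` and `B`, with its
index set relabelled along `e`. -/
noncomputable def tensorMatrixEquiv (K : Type*) [CommRing K] (e : ι × ι' ≃ κ) :
    Matrix ι ι K ⊗[K] Matrix ι' ι' K ≃ₐ[K] Matrix κ κ K :=
  (Matrix.kroneckerAlgEquiv ι ι' K).trans (Matrix.reindexAlgEquiv K K e)

theorem tensorMatrixEquiv_tmul_apply [CommRing K] (e : ι × ι' ≃ κ) (A : Matrix ι ι K)
    (B : Matrix ι' ι' K) (p q : ι × ι') :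
    tensorMatrixEquiv K e (A ⊗ₜ B) (e p) (e q) = A p.1 q.1 * B p.2 q.2 := by
  simp [tensorMatrixEquiv]

variable [AddCommGroup M] {deg : ι → M} {deg' : ι' → M} {deg'' : κ → M} {α β δ : M}
  {e : ι × ι' ≃ κ}

theorem IsHomogeneousMatrix.tensor [CommRing K] {A : Matrix ι ι K} {B : Matrix ι' ι' K}
    (hA : IsHomogeneousMatrix deg α A) (hB : IsHomogeneousMatrix deg' β B)
    (he : ∀ p, deg'' (e p) = deg p.1 + deg' p.2) :
    IsHomogeneousMatrix deg'' (α + β) (tensorMatrixEquiv K e (A ⊗ₜ B)) := by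
  intro i j hij
  obtain ⟨p, rfl⟩ := e.surjective i
  obtain ⟨q, rfl⟩ := e.surjective j
  rw [tensorMatrixEquiv_tmul_apply] at hij
  rw [he, he, hA (left_ne_zero_of_mul hij), hB (right_ne_zero_of_mul hij), add_add_add_comm]

theorem IsSplitting.exists_isSplitting_tensor [CommRing K] {D h : Matrix ι ι K}
    {D' h' : Matrix ι' ι' K} (hs : IsSplitting D h) (hs' : IsSplitting D' h')
    (hD : IsHomogeneousMatrix deg δ D) (hh : IsHomogeneousMatrix deg (-δ) h)
    (hh' : IsHomogeneousMatrix deg' (-δ) h')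
    (he : ∀ p, deg'' (e p) = deg p.1 + deg' p.2) {sgn : M → K} (hsgn : ∀ m, sgn m * sgn m = 1)
    (hsgnδ : ∀ m, sgn (m + δ) = -sgn m) {D'' : Matrix κ κ K}
    (hD'' : D'' = tensorMatrixEquiv K e
      (tensorDifferential K (Matrix.diagonal (sgn ∘ deg)) D D')) :
    ∃ h'', IsHomogeneousMatrix deg'' (-δ) h'' ∧ IsSplitting D'' h'' ∧
      ∀ p, homotopyDefect D'' h'' (e p) (e p) =
        homotopyDefect D h p.1 p.1 * homotopyDefect D' h' p.2 p.2 := by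
  set ε := Matrix.diagonal (sgn ∘ deg)
  have hεε : ε * ε = 1 := by
    rw [Matrix.diagonal_mul_diagonal]
    simp only [Function.comp_apply, hsgn, Matrix.diagonal_one]
  have hDε : D * ε = -(ε * D) := hD.mul_diagonal_eq_neg hsgnδ
  have hhε : h * ε = -(ε * h) := hh.mul_diagonal_eq_neg fun m => by
    rw [eq_comm, neg_eq_iff_eq_neg, ← hsgnδ, neg_add_cancel_right]
  refine ⟨tensorMatrixEquiv K e (tensorHomotopy K ε D h h'), ?_, ?_, fun p => ?_⟩
  · rw [tensorHomotopy, map_add]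
    refine .add ?_ ?_
    · simpa only [add_zero] using hh.tensor .one he
    · have hεP := (IsHomogeneousMatrix.diagonal (sgn ∘ deg)).mul (hD.homotopyDefect hh)
      simpa only [zero_add] using hεP.tensor hh' he
  · rw [hD'']
    exact (hs.tensor K hs' hεε hDε hhε).map _
  · rw [hD'', ← map_homotopyDefect, hs.homotopyDefect_tensor K hεε hDε hhε,
      tensorMatrixEquiv_tmul_apply]

end TensorMatrices

section RankOverDomain

theorem finrank_map_add_finrank_ker_inf {R V W : Type*} [CommRing R] [IsDomain R] [AddCommGroup V]
    [Module R V] [AddCommGroup W] [Module R W] (f : V →ₗ[R] W) (p : Submodule R V)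
    [Module.Finite R p] :
    Module.finrank R (p.map f) + Module.finrank R (LinearMap.ker f ⊓ p : Submodule R V) =
      Module.finrank R p := by
  rw [← Submodule.finrank_quotient_add_finrank (LinearMap.ker (f.domRestrict p)),
    (f.domRestrict p).quotKerEquivRange.finrank_eq, LinearMap.range_domRestrict,
    LinearMap.ker_domRestrict, ← Submodule.finrank_map_subtype_eq, Submodule.map_comap_subtype,
    inf_comm]

theorem rank_map_algebraMap_of_isFractionRing {R m n : Type*} (K : Type*) [CommRing R] [Field K]
    [Algebra R K] [IsFractionRing R K] [Finite m] [Fintype n] (A : Matrix m n R) :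
    (A.map (algebraMap R K)).rank = A.rank := by
  let toK : (m → R) →ₗ[R] (m → K) := .pi fun i => Algebra.linearMap R K ∘ₗ .proj i
  have hcols : Set.range (A.map (algebraMap R K)).col = toK '' Set.range A.col := by
    rw [← Set.range_comp]
    rfl
  rw [Matrix.rank_eq_finrank_span_cols, Matrix.rank_eq_finrank_span_cols, hcols,
    ← Submodule.localized'_span K (nonZeroDivisors R),
    IsLocalization.finrank_eq K (nonZeroDivisors R) le_rfl]
  exact IsLocalizedModule.finrank_eq (nonZeroDivisors R)
    (Submodule.toLocalized' K (nonZeroDivisors R) toK (Submodule.span R _)) le_rfl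

end RankOverDomain

section CoefficientMatrix

open Finsupp (basisSingleOne supported)

variable {ι M R : Type*} (K : Type*) [Fintype ι] [DecidableEq ι] [CommRing R] [CommRing K]
  [Algebra R K]

/-- The matrix over `K` of an endomorphism of the free `R`-module on `ι`. -/
noncomputable def coefficientMatrix (f : (ι →₀ R) →ₗ[R] (ι →₀ R)) : Matrix ι ι K :=
  (LinearMap.toMatrix basisSingleOne basisSingleOne f).map (algebraMap R K)

theorem coefficientMatrix_apply (f : (ι →₀ R) →ₗ[R] (ι →₀ R)) (i j : ι) :
    coefficientMatrix K f i j = algebraMap R K (f (Finsupp.single j 1) i) := by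
  rw [coefficientMatrix, Matrix.map_apply, LinearMap.toMatrix_apply, Finsupp.basisSingleOne_repr,
    LinearEquiv.refl_apply, Finsupp.coe_basisSingleOne]

theorem coefficientMatrix_comp (f g : (ι →₀ R) →ₗ[R] (ι →₀ R)) :
    coefficientMatrix K (f ∘ₗ g) = coefficientMatrix K f * coefficientMatrix K g := by
  rw [coefficientMatrix, LinearMap.toMatrix_comp _ basisSingleOne, Matrix.map_mul]
  rfl

theorem coefficientMatrix_injective [FaithfulSMul R K] :
    Function.Injective (coefficientMatrix K : ((ι →₀ R) →ₗ[R] (ι →₀ R)) → Matrix ι ι K) :=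
  (Matrix.map_injective (FaithfulSMul.algebraMap_injective R K)).comp
    (LinearMap.toMatrix basisSingleOne basisSingleOne).injective

variable {K} in
theorem IsHomogeneousMatrix.map_supported_le [FaithfulSMul R K] [AddCommGroup M] {deg : ι → M}
    {δ : M} {f : (ι →₀ R) →ₗ[R] (ι →₀ R)}
    (hf : IsHomogeneousMatrix deg δ (coefficientMatrix K f)) (m : M) :
    (supported R R {i | deg i = m}).map f ≤ supported R R {i | deg i = m + δ} := by
  rw [Finsupp.supported_eq_span_single, Submodule.map_span, Submodule.span_le]
  rintro _ ⟨_, ⟨j, rfl, rfl⟩, rfl⟩ i hi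
  apply hf
  rw [coefficientMatrix_apply, map_ne_zero_iff _ (FaithfulSMul.algebraMap_injective R K)]
  exact Finsupp.mem_support_iff.1 hi

end CoefficientMatrix

section SupportedSubmodules

open Finsupp (basisSingleOne supported)

variable {ι M R : Type*} (K : Type*) [Fintype ι] [DecidableEq ι] [DecidableEq M] [CommRing R]
  (deg : ι → M) (m : M)

theorem range_toLin_degreeProjection :
    LinearMap.range (Matrix.toLin basisSingleOne basisSingleOne (degreeProjection deg m)) =
      supported R R {i | deg i = m} := by
  set E := Matrix.toLin basisSingleOne basisSingleOne (degreeProjection (K := R) deg m)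
  have hE (x : ι →₀ R) (i : ι) : E x i = if deg i = m then x i else 0 := by
    have hrepr : E x i = (degreeProjection deg m).mulVec x i :=
      congrFun (Matrix.repr_toLin basisSingleOne basisSingleOne (degreeProjection deg m) x) i
    rw [hrepr, degreeProjection, Matrix.mulVec_diagonal, ite_mul, one_mul, zero_mul]
  ext x
  rw [Finsupp.mem_supported']
  constructor
  · rintro ⟨y, rfl⟩ i hi
    exact (hE y i).trans (if_neg hi)
  · intro hx
    refine ⟨x, Finsupp.ext fun i => ?_⟩
    rw [hE, ite_eq_left_iff]
    exact fun hi => (hx i hi).symm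

variable [Field K] [Algebra R K] [IsFractionRing R K]

theorem finrank_map_supported (f : (ι →₀ R) →ₗ[R] (ι →₀ R)) :
    Module.finrank R ((supported R R {i | deg i = m}).map f) =
      (coefficientMatrix K f * degreeProjection deg m).rank := by
  have hmap : coefficientMatrix K f * degreeProjection deg m =
      (LinearMap.toMatrix basisSingleOne basisSingleOne f * degreeProjection deg m).map
        (algebraMap R K) := by
    rw [Matrix.map_mul, degreeProjection, degreeProjection, Matrix.diagonal_map (map_zero _)]
    simp only [coefficientMatrix, apply_ite (algebraMap R K), map_one, map_zero]
  rw [hmap, rank_map_algebraMap_of_isFractionRing,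
    Matrix.rank_eq_finrank_range_toLin _ basisSingleOne basisSingleOne,
    Matrix.toLin_mul basisSingleOne basisSingleOne basisSingleOne, Matrix.toLin_toMatrix,
    LinearMap.range_comp, range_toLin_degreeProjection]

theorem finrank_supported :
    (Module.finrank R (supported R R {i | deg i = m}) : K) =
      (degreeProjection deg m : Matrix ι ι K).trace := by
  have hid : coefficientMatrix K (LinearMap.id : (ι →₀ R) →ₗ[R] (ι →₀ R)) = 1 := by
    rw [coefficientMatrix, LinearMap.toMatrix_id, Matrix.map_one _ (map_zero _) (map_one _)]
  rw [trace_eq_rank_of_isIdempotentElem (isIdempotentElem_degreeProjection deg m),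
    ← Submodule.map_id (supported R R _), finrank_map_supported K, hid, one_mul]

variable {K}

theorem IsSplitting.trace_homotopyDefect_mul_degreeProjection [AddCommGroup M] {δ : M}
    {f : (ι →₀ R) →ₗ[R] (ι →₀ R)} {h : Matrix ι ι K} (hs : IsSplitting (coefficientMatrix K f) h)
    (hf : IsHomogeneousMatrix deg δ (coefficientMatrix K f)) (hh : IsHomogeneousMatrix deg (-δ) h) :
    (homotopyDefect (coefficientMatrix K f) h * degreeProjection deg m).trace =
      (Module.finrank R (LinearMap.ker f ⊓ supported R R {i | deg i = m} :
        Submodule R (ι →₀ R)) : K) -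
      Module.finrank R ((supported R R {i | deg i = m - δ}).map f) := by
  have hdomain : IsDomain R := (FaithfulSMul.algebraMap_injective R K).isDomain
  have hfinite : Module.Finite R (supported R R {i | deg i = m}) :=
    .equiv (Finsupp.supportedEquivFinsupp _).symm
  rw [homotopyDefect, sub_mul, sub_mul, one_mul, Matrix.trace_sub, Matrix.trace_sub,
    hs.trace_homotopy_mul_differential hf hh, hs.trace_differential_mul_homotopy hf hh,
    ← finrank_supported (R := R), ← finrank_map_supported, ← finrank_map_supported,
    ← finrank_map_add_finrank_ker_inf f]
  push_cast
  ring

end SupportedSubmodules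

section EdgeSign

variable {α : Type*} [LinearOrder α]

/-- The sign `(-1)^k`, where `k` is the number of elements of `s` below `e`, with which the edge `e`
is added to the edge set `s`. -/
def edgeSign (s : Finset α) (e : α) : ℤ := (-1) ^ (s.filter fun f => f < e).card

theorem edgeSign_insert {s : Finset α} {e : α} (he : e ∉ s) (f : α) :
    edgeSign (insert e s) f = if e < f then -edgeSign s f else edgeSign s f := by
  rw [edgeSign, Finset.filter_insert]
  split_ifs
  · rw [Finset.card_insert_of_notMem fun hmem => he (Finset.mem_of_mem_filter e hmem), pow_succ,
      mul_neg_one, edgeSign]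
  · rfl

theorem edgeSign_insert_mul_edgeSign {s : Finset α} {e f : α} (he : e ∉ s) (hf : f ∉ s)
    (hne : e ≠ f) :
    edgeSign (insert e s) f * edgeSign s e = -(edgeSign (insert f s) e * edgeSign s f) := by
  rw [edgeSign_insert he, edgeSign_insert hf]
  rcases hne.lt_or_gt with hlt | hgt
  · rw [if_pos hlt, if_neg hlt.asymm, neg_mul, mul_comm]
  · rw [if_neg hgt.asymm, if_pos hgt, neg_mul, neg_neg, mul_comm]

end EdgeSign

namespace OGraph

section Merge

variable {G : OGraph} {S T U : G.EState} {e f : Fin G.n}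

/-- The map on connected components induced by adding edges. -/
def compMap (G : OGraph) {s t : Finset (Fin G.n)} (hst : s ⊆ t) : G.Comp s → G.Comp t :=
  qmap fun _ _ huv => huv.imp fun _ he => ⟨hst he.1, he.2⟩

theorem compMap_comp_compMap {s t u : Finset (Fin G.n)} (hst : s ⊆ t) (htu : t ⊆ u) :
    G.compMap htu ∘ G.compMap hst = G.compMap (hst.trans htu) :=
  funext <| Quot.ind fun _ => rfl

/-- `T` arises from `S` by adding edges, with no two `x`-colored components of `S` merging: the
product of the colors of `S` along the merging of components is nonzero and equals `T`. -/
def IsMerge (S T : G.EState) : Prop :=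
  ∃ hST : S.1 ⊆ T.1, Set.BijOn (G.compMap hST) {k | S.2 k} {K | T.2 K}

theorem IsMerge.trans (hST : IsMerge S T) (hTU : IsMerge T U) : IsMerge S U :=
  ⟨hST.1.trans hTU.1, compMap_comp_compMap hST.1 hTU.1 ▸ hTU.2.comp hST.2⟩

theorem IsMerge.eq_of_fst_eq {T' : G.EState} (hT : IsMerge S T) (hT' : IsMerge S T')
    (hfst : T.1 = T'.1) : T = T' := by
  obtain ⟨t, c⟩ := T
  obtain ⟨t', c'⟩ := T'
  obtain rfl : t = t' := hfst
  have hcc' : {K | c K} = {K | c' K} := hT.2.image_eq.symm.trans hT'.2.image_eq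
  rw [show c = c' from funext (Set.ext_iff.1 hcc' · |> propext)]

theorem IsMerge.refl (S : G.EState) : IsMerge S S :=
  ⟨subset_rfl, (show id = G.compMap subset_rfl from funext <| Quot.ind fun _ => rfl) ▸
    Set.bijOn_id _⟩

theorem fst_eq_and_isMerge_iff : T.1 = S.1 ∧ IsMerge S T ↔ T = S := by
  constructor
  · rintro ⟨hfst, hST⟩
    exact hST.eq_of_fst_eq (.refl S) hfst
  · rintro rfl
    exact ⟨rfl, .refl T⟩

/-- The state with edge set `t` whose `x`-colored components are those that contain an `x`-colored
component of `S`. -/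
def pushState (S : G.EState) {t : Finset (Fin G.n)} (hSt : S.1 ⊆ t) : G.EState :=
  ⟨t, fun K => ∃ k, G.compMap hSt k = K ∧ S.2 k⟩

theorem isMerge_pushState {t : Finset (Fin G.n)} (hSt : S.1 ⊆ t)
    (hinj : Set.InjOn (G.compMap hSt) {k | S.2 k}) : IsMerge S (pushState S hSt) :=
  ⟨hSt, fun k hk => ⟨k, rfl, hk⟩, hinj, fun _ ⟨k, hkK, hk⟩ => ⟨k, hk, hkK⟩⟩

theorem IsMerge.exists_between {t : Finset (Fin G.n)} (hSU : IsMerge S U) (hSt : S.1 ⊆ t)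
    (htU : t ⊆ U.1) : ∃ T : G.EState, T.1 = t ∧ IsMerge S T ∧ IsMerge T U := by
  have hbij := hSU.2
  rw [← compMap_comp_compMap hSt htU] at hbij
  have hSt_merge := isMerge_pushState hSt hbij.injOn.of_comp
  refine ⟨pushState S hSt, rfl, hSt_merge, htU, ?_⟩
  rw [← hSt_merge.2.image_eq]
  exact (Set.bijOn_comp_iff hbij.injOn.of_comp).1 hbij

theorem IsMerge.jdeg_eq (hST : IsMerge S T) : G.jdeg T = G.jdeg S :=
  (Nat.card_congr hST.2.equiv).symm

/-- `T` is the state obtained from `S` by adding the new edge `e`, with nonzero product of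
colors. -/
def IsEdgeStep (S : G.EState) (e : Fin G.n) (T : G.EState) : Prop :=
  e ∉ S.1 ∧ T.1 = insert e S.1 ∧ IsMerge S T

theorem exists_isEdgeStep_isEdgeStep_iff :
    (∃ T, IsEdgeStep S e T ∧ IsEdgeStep T f U) ↔
      (e ∉ S.1 ∧ f ∉ S.1 ∧ e ≠ f) ∧ U.1 = insert f (insert e S.1) ∧ IsMerge S U := by
  constructor
  · rintro ⟨T, ⟨he, hT, hST⟩, hf, hU, hTU⟩
    rw [hT, Finset.mem_insert, not_or] at hf
    exact ⟨⟨he, hf.2, Ne.symm hf.1⟩, hT ▸ hU, hST.trans hTU⟩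
  · rintro ⟨⟨he, hf, hne⟩, hU, hSU⟩
    obtain ⟨T, hT, hST, hTU⟩ := hSU.exists_between (Finset.subset_insert e S.1)
      (hU ▸ Finset.subset_insert f _)
    refine ⟨T, ⟨he, hT, hST⟩, ?_, hT ▸ hU, hTU⟩
    rw [hT, Finset.mem_insert, not_or]
    exact ⟨hne.symm, hf⟩

theorem isEdgeStep_iff_eq_pushState :
    IsEdgeStep S e T ↔
      e ∉ S.1 ∧ Set.InjOn (G.compMap (Finset.subset_insert e S.1)) {k | S.2 k} ∧
        pushState S (Finset.subset_insert e S.1) = T := by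
  constructor
  · rintro ⟨he, hT, hST⟩
    obtain ⟨t, c⟩ := T
    obtain rfl : t = insert e S.1 := hT
    have hinj := hST.2.injOn
    exact ⟨he, hinj, (isMerge_pushState _ hinj).eq_of_fst_eq hST rfl⟩
  · rintro ⟨he, hinj, rfl⟩
    exact ⟨he, rfl, isMerge_pushState _ hinj⟩

open Classical in
theorem addEdge_apply (S : G.EState) (e : Fin G.n) (T : G.EState) :
    G.addEdge S e T = if IsEdgeStep S e T then 1 else 0 := by
  have hcollide : (∃ k₁ k₂ : G.Comp S.1, k₁ ≠ k₂ ∧ G.compMap (Finset.subset_insert e S.1) k₁ =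
      G.compMap (Finset.subset_insert e S.1) k₂ ∧ S.2 k₁ ∧ S.2 k₂) ↔
      ¬ Set.InjOn (G.compMap (Finset.subset_insert e S.1)) {k | S.2 k} := by
    simp only [Set.InjOn, Set.mem_ofPred_eq]
    grind
  have haddEdge : G.addEdge S e = if e ∈ S.1 then 0 else
      if ¬ Set.InjOn (G.compMap (Finset.subset_insert e S.1)) {k | S.2 k} then 0
      else Finsupp.single (pushState S (Finset.subset_insert e S.1)) 1 := by
    simp only [← hcollide]
    rfl
  simp only [haddEdge, isEdgeStep_iff_eq_pushState, ite_not, ite_and, ite_not]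
  split_ifs <;> simp_all

end Merge

section DifferentialMatrix

variable (G : OGraph)

instance finite_comp (s : Finset (Fin G.n)) : Finite (G.Comp s) :=
  Quot.finite _

noncomputable instance fintypeEState : Fintype G.EState :=
  Fintype.ofFinite _

noncomputable instance decidableEqEState : DecidableEq G.EState :=
  Classical.decEq _

open Classical in
/-- The summand of the matrix of the differential that adds the edge `e`. -/
noncomputable def edgeMatrix (e : Fin G.n) : Matrix G.EState G.EState ℚ :=
  Matrix.of fun T S => if IsEdgeStep S e T then edgeSign S.1 e else 0

theorem coefficientMatrix_diff :
    coefficientMatrix ℚ G.diff = ∑ e, G.edgeMatrix e := by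
  ext T S
  rw [coefficientMatrix_apply, diff, Finsupp.lsum_single, LinearMap.toSpanSingleton_apply_one,
    dState, Finsupp.finsetSum_apply, map_sum, Matrix.sum_apply]
  simp only [Finsupp.smul_apply, addEdge_apply, smul_eq_mul, mul_ite, mul_one, mul_zero,
    eq_intCast, edgeMatrix, edgeSign, Matrix.of_apply, Int.cast_ite, Int.cast_zero]

open Classical in
theorem edgeMatrix_mul_edgeMatrix_apply (e f : Fin G.n) (S U : G.EState) :
    (G.edgeMatrix f * G.edgeMatrix e) U S =
      if (e ∉ S.1 ∧ f ∉ S.1 ∧ e ≠ f) ∧ U.1 = insert f (insert e S.1) ∧ IsMerge S U then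
        (edgeSign (insert e S.1) f * edgeSign S.1 e : ℚ) else 0 := by
  simp only [← exists_isEdgeStep_isEdgeStep_iff, Matrix.mul_apply, edgeMatrix, Matrix.of_apply,
    ite_zero_mul_ite_zero]
  split_ifs with hex
  · obtain ⟨T, hST, hTU⟩ := hex
    rw [Finset.sum_eq_single T, if_pos ⟨hTU, hST⟩, hST.2.1]
    · rintro T' - hne
      exact if_neg fun h => hne (h.2.2.2.eq_of_fst_eq hST.2.2 (h.2.2.1.trans hST.2.1.symm))
    · exact fun hT => absurd (Finset.mem_univ T) hT
  · exact Finset.sum_eq_zero fun T _ => if_neg fun h => hex ⟨T, h.2, h.1⟩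

theorem edgeMatrix_anticomm (e f : Fin G.n) :
    G.edgeMatrix f * G.edgeMatrix e = -(G.edgeMatrix e * G.edgeMatrix f) := by
  classical
  ext U S
  rw [Matrix.neg_apply, edgeMatrix_mul_edgeMatrix_apply, edgeMatrix_mul_edgeMatrix_apply]
  have hcomm : ((f ∉ S.1 ∧ e ∉ S.1 ∧ f ≠ e) ∧ U.1 = insert e (insert f S.1) ∧ IsMerge S U) ↔
      (e ∉ S.1 ∧ f ∉ S.1 ∧ e ≠ f) ∧ U.1 = insert f (insert e S.1) ∧ IsMerge S U := by
    rw [Finset.insert_comm, ne_comm, and_left_comm (a := f ∉ S.1)]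
  rw [if_congr hcomm rfl rfl]
  split_ifs with hstep
  · obtain ⟨⟨he, hf, hne⟩, -⟩ := hstep
    exact_mod_cast edgeSign_insert_mul_edgeSign he hf hne
  · exact neg_zero.symm

theorem coefficientMatrix_diff_mul_self :
    coefficientMatrix ℚ G.diff * coefficientMatrix ℚ G.diff = 0 := by
  have hneg : coefficientMatrix ℚ G.diff * coefficientMatrix ℚ G.diff =
      -(coefficientMatrix ℚ G.diff * coefficientMatrix ℚ G.diff) := by
    rw [coefficientMatrix_diff, Finset.sum_mul_sum]
    conv_lhs => rw [Finset.sum_comm]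
    simp only [← Finset.sum_neg_distrib, ← edgeMatrix_anticomm]
  exact Matrix.ext fun U S => self_eq_neg.1 (congrFun₂ hneg U S)

theorem diff_comp_diff : G.diff ∘ₗ G.diff = 0 := by
  apply coefficientMatrix_injective ℚ
  rw [coefficientMatrix_comp, coefficientMatrix_diff_mul_self]
  ext T S
  simp [coefficientMatrix_apply]

/-- The number of edges and the number of `x`-colored components, as integers so that degrees can
be subtracted. -/
noncomputable def bidegree (S : G.EState) : ℤ × ℤ := (S.1.card, G.jdeg S)

theorem isHomogeneousMatrix_diff :
    IsHomogeneousMatrix G.bidegree (1, 0) (coefficientMatrix ℚ G.diff) := by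
  classical
  intro T S hTS
  rw [coefficientMatrix_diff, Matrix.sum_apply] at hTS
  obtain ⟨e, -, he⟩ := Finset.exists_ne_zero_of_sum_ne_zero hTS
  obtain ⟨heS, hT, hmerge⟩ : IsEdgeStep S e T := (ite_ne_right_iff.1 he).1
  rw [bidegree, bidegree, hT, hmerge.jdeg_eq, Finset.card_insert_of_notMem heS, Prod.mk_add_mk,
    add_zero, Nat.cast_succ]

end DifferentialMatrix

section Cohomology

variable (G : OGraph)

theorem Cmod_eq_supported (i j : ℕ) :
    G.Cmod i j = Finsupp.supported ℤ ℤ {S | G.bidegree S = ((i : ℤ), (j : ℤ))} := by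
  simp only [Cmod, bidegree, Prod.mk.injEq, Nat.cast_inj]

theorem Bmod_eq_map_supported (i j : ℕ) :
    G.Bmod i j =
      (Finsupp.supported ℤ ℤ {S | G.bidegree S = ((i : ℤ), (j : ℤ)) - (1, 0)}).map G.diff := by
  cases i with
  | zero =>
    have hempty : {S | G.bidegree S = (((0 : ℕ) : ℤ), (j : ℤ)) - (1, 0)} = ∅ := by
      refine Set.eq_empty_of_forall_notMem fun S hS => ?_
      have hcard : (S.1.card : ℤ) = 0 - 1 := congrArg Prod.fst hS
      lia
    rw [hempty, Finsupp.supported_empty, Submodule.map_bot]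
    rfl
  | succ i =>
    rw [Bmod, Cmod_eq_supported, Prod.mk_sub_mk, Nat.cast_succ, add_sub_cancel_right, sub_zero]

theorem Bmod_le_Zmod (i j : ℕ) : G.Bmod i j ≤ G.Zmod i j := by
  rw [Bmod_eq_map_supported, Zmod, Cmod_eq_supported]
  refine le_inf ?_ ?_
  · rintro _ ⟨x, -, rfl⟩
    exact LinearMap.congr_fun G.diff_comp_diff x
  · have hle := G.isHomogeneousMatrix_diff.map_supported_le (((i : ℤ), (j : ℤ)) - (1, 0))
    rwa [sub_add_cancel] at hle

theorem finrank_Hmod_add_finrank_Bmod (i j : ℕ) :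
    Module.finrank ℤ (G.Hmod i j) + Module.finrank ℤ (G.Bmod i j) =
      Module.finrank ℤ (G.Zmod i j) := by
  rw [← (Submodule.comapSubtypeEquivOfLe (G.Bmod_le_Zmod i j)).finrank_eq,
    ← Submodule.finrank_quotient_add_finrank ((G.Bmod i j).comap (G.Zmod i j).subtype)]
  rfl

theorem finrank_Hmod {h : Matrix G.EState G.EState ℚ}
    (hh : IsHomogeneousMatrix G.bidegree (-(1, 0)) h)
    (hs : IsSplitting (coefficientMatrix ℚ G.diff) h) (i j : ℕ) :
    (Module.finrank ℤ (G.Hmod i j) : ℚ) =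
      (homotopyDefect (coefficientMatrix ℚ G.diff) h *
        degreeProjection G.bidegree (i, j)).trace := by
  rw [hs.trace_homotopyDefect_mul_degreeProjection _ _ G.isHomogeneousMatrix_diff hh,
    ← Bmod_eq_map_supported, ← Cmod_eq_supported, ← Zmod, ← finrank_Hmod_add_finrank_Bmod,
    Nat.cast_add, add_sub_cancel_right]

theorem finrank_Hmod_eq_zero {i : ℕ} (hi : G.n < i) (j : ℕ) :
    Module.finrank ℤ (G.Hmod i j) = 0 := by
  have hempty : {S : G.EState | S.1.card = i ∧ G.jdeg S = j} = ∅ := by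
    refine Set.eq_empty_of_forall_notMem fun S hS => ?_
    exact (hS.1 ▸ hi).not_ge (card_finset_fin_le S.1)
  have hZ : G.Zmod i j = ⊥ := by
    rw [Zmod, Cmod, hempty, Finsupp.supported_empty, inf_bot_eq]
  have hsum := G.finrank_Hmod_add_finrank_Bmod i j
  rw [hZ, finrank_bot] at hsum
  exact Nat.eq_zero_of_add_eq_zero_right hsum

theorem coeff_Rpoly (i : ℕ) : G.Rpoly.coeff i = G.qdimH i := by
  rw [Rpoly, Polynomial.finsetSum_coeff]
  simp only [Polynomial.coeff_C_mul_X_pow, Finset.sum_ite_eq, Finset.mem_range,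
    ite_eq_left_iff, not_lt]
  intro hi
  ext j
  rw [qdimH, PowerSeries.coeff_mk, G.finrank_Hmod_eq_zero hi, Nat.cast_zero, map_zero]

theorem map_Rpoly {h : Matrix G.EState G.EState ℚ}
    (hh : IsHomogeneousMatrix G.bidegree (-(1, 0)) h)
    (hs : IsSplitting (coefficientMatrix ℚ G.diff) h) :
    G.Rpoly.map (PowerSeries.map (Int.castRingHom ℚ)) =
      ∑ S : G.EState, Polynomial.monomial S.1.card (PowerSeries.monomial (G.jdeg S)
        (homotopyDefect (coefficientMatrix ℚ G.diff) h S S)) := by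
  ext i j
  have hrank : PowerSeries.coeff j (PowerSeries.map (Int.castRingHom ℚ) (G.qdimH i)) =
      Module.finrank ℤ (G.Hmod i j) := by
    rw [PowerSeries.coeff_map, qdimH, PowerSeries.coeff_mk, map_natCast]
  rw [Polynomial.coeff_map, coeff_Rpoly, hrank, G.finrank_Hmod hh hs, trace_mul_degreeProjection,
    Polynomial.finsetSum_coeff, map_sum]
  refine Finset.sum_congr rfl fun S _ => ?_
  simp only [bidegree, Prod.mk.injEq, Nat.cast_inj, Polynomial.coeff_monomial, ite_and,
    apply_ite (PowerSeries.coeff j), PowerSeries.coeff_monomial, eq_comm (a := j), map_zero]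

end Cohomology

end OGraph

theorem sym2_map_eq_mk_iff {α β : Type*} {f : α → β} {z : Sym2 α} {x y : β} :
    z.map f = s(x, y) ↔ ∃ u v, z = s(u, v) ∧ f u = x ∧ f v = y := by
  constructor
  · induction z with | _ u v
    rw [Sym2.map_mk, Sym2.eq_iff]
    rintro (⟨rfl, rfl⟩ | ⟨rfl, rfl⟩)
    · exact ⟨u, v, rfl, rfl, rfl⟩
    · exact ⟨v, u, Sym2.eq_swap, rfl, rfl⟩
  · rintro ⟨u, v, rfl, rfl, rfl⟩
    rfl

theorem bijOn_sumMap_iff {α β α' β' : Type*} {f : α → α'} {g : β → β'} {p : α → Prop}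
    {q : β → Prop} {p' : α' → Prop} {q' : β' → Prop} :
    Set.BijOn (Sum.map f g) {x | Sum.elim p q x} {y | Sum.elim p' q' y} ↔
      Set.BijOn f {a | p a} {a | p' a} ∧ Set.BijOn g {b | q b} {b | q' b} := by
  simp only [Set.BijOn, Set.MapsTo, Set.InjOn, Set.SurjOn, Set.subset_def, Set.mem_image,
    Set.mem_ofPred_eq, Sum.forall, Sum.exists, Sum.map_inl, Sum.map_inr, Sum.elim_inl, Sum.elim_inr,
    Sum.inl.injEq, Sum.inr.injEq, reduceCtorEq, and_false, exists_false, or_false, false_or,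
    false_imp_iff, implies_true, and_true, true_and]
  tauto

theorem bijOn_iff_of_semiconj {α β α' β' : Type*} (e : α ≃ β) (e' : α' ≃ β')
    {f : α → α'} {g : β → β'} (hfg : ∀ a, g (e a) = e' (f a)) {s : Set α} {t : Set α'} :
    Set.BijOn g (e.symm ⁻¹' s) (e'.symm ⁻¹' t) ↔ Set.BijOn f s t := by
  simp only [Set.BijOn, Set.MapsTo, Set.InjOn, Set.SurjOn, Set.subset_def, Set.mem_image,
    Set.mem_preimage, e.surjective.forall, e.surjective.exists, e'.surjective.forall, hfg,
    Equiv.symm_apply_apply, EmbeddingLike.apply_eq_iff_eq]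

namespace OGraph

section DisjointUnion

variable {G₁ G₂ : OGraph}

variable (G₁ G₂) in
/-- The edges of the disjoint union, with those of `G₁` first. -/
def edgeEquiv : Fin G₁.n ⊕ Fin G₂.n ≃ Fin (disj G₁ G₂).n := finSumFinEquiv

theorem ends_edgeEquiv_inl (e : Fin G₁.n) :
    (disj G₁ G₂).ends (edgeEquiv G₁ G₂ (.inl e)) = (G₁.ends e).map Sum.inl :=
  congrArg (Sum.elim _ _) (finSumFinEquiv.symm_apply_apply (.inl e))

theorem ends_edgeEquiv_inr (e : Fin G₂.n) :
    (disj G₁ G₂).ends (edgeEquiv G₁ G₂ (.inr e)) = (G₂.ends e).map Sum.inr :=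
  congrArg (Sum.elim _ _) (finSumFinEquiv.symm_apply_apply (.inr e))

theorem edgeEquiv_lt_edgeEquiv_iff (x y : Fin G₁.n ⊕ Fin G₂.n) :
    edgeEquiv G₁ G₂ x < edgeEquiv G₁ G₂ y ↔ Sum.Lex (· < ·) (· < ·) x y := by
  change finSumFinEquiv x < finSumFinEquiv y ↔ _
  rcases x with x | x <;> rcases y with y | y <;>
    simp only [finSumFinEquiv_apply_left, finSumFinEquiv_apply_right, Fin.lt_def, Fin.val_castAdd,
      Fin.val_natAdd, Sum.lex_inl_inl, Sum.lex_inr_inr, Sum.Lex.sep, Sum.lex_inr_inl] <;>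
    lia

/-- The edge set of the disjoint union that consists of the edges in `s` and those in `t`. -/
def unionEdges (s : Finset (Fin G₁.n)) (t : Finset (Fin G₂.n)) : Finset (Fin (disj G₁ G₂).n) :=
  (s.disjSum t).map (edgeEquiv G₁ G₂).toEmbedding

variable {s s' : Finset (Fin G₁.n)} {t t' : Finset (Fin G₂.n)}

theorem edgeEquiv_mem_unionEdges (x : Fin G₁.n ⊕ Fin G₂.n) :
    edgeEquiv G₁ G₂ x ∈ unionEdges s t ↔ x ∈ s.disjSum t :=
  Finset.mem_map' _

theorem unionEdges_subset_unionEdges :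
    unionEdges s t ⊆ unionEdges s' t' ↔ s ⊆ s' ∧ t ⊆ t' := by
  rw [unionEdges, unionEdges, Finset.map_subset_map, Finset.disjSum_subset,
    Finset.toLeft_disjSum, Finset.toRight_disjSum]

theorem unionEdges_inj : unionEdges s t = unionEdges s' t' ↔ s = s' ∧ t = t' := by
  rw [unionEdges, unionEdges, Finset.map_inj, Finset.disjSum_inj]

theorem exists_unionEdges_eq (r : Finset (Fin (disj G₁ G₂).n)) :
    ∃ (s : Finset (Fin G₁.n)) (t : Finset (Fin G₂.n)), unionEdges s t = r := by
  refine ⟨(r.map (edgeEquiv G₁ G₂).symm.toEmbedding).toLeft,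
    (r.map (edgeEquiv G₁ G₂).symm.toEmbedding).toRight, ?_⟩
  rw [unionEdges, Finset.toLeft_disjSum_toRight, Finset.map_map]
  simp

theorem card_unionEdges : (unionEdges s t).card = s.card + t.card := by
  rw [unionEdges, Finset.card_map, Finset.card_disjSum]

theorem insert_inl_unionEdges (e : Fin G₁.n) :
    insert (edgeEquiv G₁ G₂ (.inl e)) (unionEdges s t) = unionEdges (insert e s) t := by
  rw [unionEdges, unionEdges, ← Equiv.coe_toEmbedding, ← Finset.map_insert]
  congr 1
  ext (x | x) <;> simp

theorem insert_inr_unionEdges (e : Fin G₂.n) :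
    insert (edgeEquiv G₁ G₂ (.inr e)) (unionEdges s t) = unionEdges s (insert e t) := by
  rw [unionEdges, unionEdges, ← Equiv.coe_toEmbedding, ← Finset.map_insert]
  congr 1
  ext (x | x) <;> simp

theorem filter_lt_inl_unionEdges (e : Fin G₁.n) :
    (unionEdges s t).filter (fun f => f < edgeEquiv G₁ G₂ (.inl e)) =
      unionEdges (s.filter fun f => f < e) ∅ := by
  rw [unionEdges, unionEdges, Finset.filter_map]
  congr 1
  ext (x | x) <;> simp [edgeEquiv_lt_edgeEquiv_iff]

theorem filter_lt_inr_unionEdges (e : Fin G₂.n) :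
    (unionEdges s t).filter (fun f => f < edgeEquiv G₁ G₂ (.inr e)) =
      unionEdges s (t.filter fun f => f < e) := by
  rw [unionEdges, unionEdges, Finset.filter_map]
  congr 1
  ext (x | x) <;> simp [edgeEquiv_lt_edgeEquiv_iff]

theorem edgeSign_unionEdges_inl (e : Fin G₁.n) :
    edgeSign (unionEdges s t) (edgeEquiv G₁ G₂ (.inl e)) = edgeSign s e := by
  rw [edgeSign, filter_lt_inl_unionEdges, card_unionEdges, Finset.card_empty, add_zero, edgeSign]

theorem edgeSign_unionEdges_inr (e : Fin G₂.n) :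
    edgeSign (unionEdges s t) (edgeEquiv G₁ G₂ (.inr e)) = (-1) ^ s.card * edgeSign t e := by
  rw [edgeSign, filter_lt_inr_unionEdges, card_unionEdges, pow_add, edgeSign]

theorem rel_unionEdges_iff {x y : G₁.V ⊕ G₂.V} :
    (disj G₁ G₂).rel (unionEdges s t) x y ↔ Sum.LiftRel (G₁.rel s) (G₂.rel t) x y := by
  have hedges : (disj G₁ G₂).rel (unionEdges s t) x y ↔
      (∃ e ∈ s, (G₁.ends e).map Sum.inl = s(x, y)) ∨
        ∃ e ∈ t, (G₂.ends e).map Sum.inr = s(x, y) := by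
    simp only [rel, (edgeEquiv G₁ G₂).surjective.exists, Sum.exists, edgeEquiv_mem_unionEdges,
      ends_edgeEquiv_inl, ends_edgeEquiv_inr, Finset.inl_mem_disjSum, Finset.inr_mem_disjSum]
    rfl
  rw [hedges]
  simp only [sym2_map_eq_mk_iff]
  rcases x with x | x <;> rcases y with y | y <;> simp [rel]

variable (s t) in
/-- The components of a disjoint union of spanning subgraphs are those of the two subgraphs. -/
def compEquiv : G₁.Comp s ⊕ G₂.Comp t ≃ (disj G₁ G₂).Comp (unionEdges s t) where
  toFun := Sum.elim
    (Quot.map Sum.inl fun _ _ huv => rel_unionEdges_iff.2 (.inl huv))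
    (Quot.map Sum.inr fun _ _ huv => rel_unionEdges_iff.2 (.inr huv))
  invFun := Quot.lift (Sum.map (Quot.mk _) (Quot.mk _)) fun _ _ hxy => by
    rcases rel_unionEdges_iff.1 hxy with huv | huv
    · exact congrArg Sum.inl (Quot.sound huv)
    · exact congrArg Sum.inr (Quot.sound huv)
  left_inv := by rintro (⟨⟨⟩⟩ | ⟨⟨⟩⟩) <;> rfl
  right_inv := by rintro ⟨_ | _⟩ <;> rfl

theorem compMap_compEquiv (hss' : s ⊆ s') (htt' : t ⊆ t') (k : G₁.Comp s ⊕ G₂.Comp t) :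
    (disj G₁ G₂).compMap (unionEdges_subset_unionEdges.2 ⟨hss', htt'⟩) (compEquiv s t k) =
      compEquiv s' t' (Sum.map (G₁.compMap hss') (G₂.compMap htt') k) := by
  rcases k with ⟨⟨⟩⟩ | ⟨⟨⟩⟩ <;> rfl

/-- The state of the disjoint union that restricts to `S` and `T`. -/
def unionState (S : G₁.EState) (T : G₂.EState) : (disj G₁ G₂).EState :=
  ⟨unionEdges S.1 T.1, fun K => Sum.elim S.2 T.2 ((compEquiv S.1 T.1).symm K)⟩

theorem fst_unionState (S : G₁.EState) (T : G₂.EState) :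
    (unionState S T).1 = unionEdges S.1 T.1 := rfl

theorem unionState_injective2 : Function.Injective2 (unionState (G₁ := G₁) (G₂ := G₂)) := by
  rintro ⟨s, c⟩ ⟨s', c'⟩ ⟨t, d⟩ ⟨t', d'⟩ heq
  obtain ⟨rfl, rfl⟩ := unionEdges_inj.1 (congrArg Sigma.fst heq)
  have hcolor : Sum.elim c d = Sum.elim c' d' :=
    (compEquiv s t).symm.surjective.injective_comp_right
      (eq_of_heq (Sigma.mk.inj heq).2)
  rw [Sum.elim_eq_iff] at hcolor
  exact ⟨congrArg (Sigma.mk s) hcolor.1, congrArg (Sigma.mk t) hcolor.2⟩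

theorem exists_unionState_eq (U : (disj G₁ G₂).EState) : ∃ S T, unionState S T = U := by
  obtain ⟨r, c⟩ := U
  obtain ⟨s, t, rfl⟩ := exists_unionEdges_eq r
  refine ⟨⟨s, fun k => c (compEquiv s t (.inl k))⟩, ⟨t, fun k => c (compEquiv s t (.inr k))⟩, ?_⟩
  refine congrArg (Sigma.mk (unionEdges s t)) (funext fun K => ?_)
  obtain ⟨k | k, rfl⟩ := (compEquiv s t).surjective K <;> simp

variable (G₁ G₂) in
/-- The enhanced states of the disjoint union are the pairs of enhanced states. -/
noncomputable def stateEquiv : G₁.EState × G₂.EState ≃ (disj G₁ G₂).EState :=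
  .ofBijective (Function.uncurry unionState) ⟨unionState_injective2.uncurry, fun U =>
    let ⟨S, T, hU⟩ := exists_unionState_eq U
    ⟨(S, T), hU⟩⟩

theorem jdeg_unionState (S : G₁.EState) (T : G₂.EState) :
    (disj G₁ G₂).jdeg (unionState S T) = G₁.jdeg S + G₂.jdeg T := by
  rw [jdeg, jdeg, jdeg, ← Nat.card_sum]
  exact Nat.card_congr (((compEquiv S.1 T.1).symm.subtypeEquiv fun _ => Iff.rfl).trans
    Equiv.subtypeSum)

theorem isMerge_unionState_iff {S S' : G₁.EState} {T T' : G₂.EState} :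
    IsMerge (unionState S T) (unionState S' T') ↔ IsMerge S S' ∧ IsMerge T T' := by
  have hbij (hS : S.1 ⊆ S'.1) (hT : T.1 ⊆ T'.1) :=
    (bijOn_iff_of_semiconj (compEquiv S.1 T.1) (compEquiv S'.1 T'.1) (compMap_compEquiv hS hT)
      (s := {k | Sum.elim S.2 T.2 k}) (t := {k | Sum.elim S'.2 T'.2 k})).trans bijOn_sumMap_iff
  constructor
  · rintro ⟨hsub, hST⟩
    obtain ⟨hS, hT⟩ := unionEdges_subset_unionEdges.1 hsub
    obtain ⟨hS_bij, hT_bij⟩ := (hbij hS hT).1 hST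
    exact ⟨⟨hS, hS_bij⟩, hT, hT_bij⟩
  · rintro ⟨⟨hS, hS_bij⟩, hT, hT_bij⟩
    exact ⟨unionEdges_subset_unionEdges.2 ⟨hS, hT⟩, (hbij hS hT).2 ⟨hS_bij, hT_bij⟩⟩

theorem isEdgeStep_unionState_inl_iff {S S' : G₁.EState} {T T' : G₂.EState} {e : Fin G₁.n} :
    IsEdgeStep (unionState S T) (edgeEquiv G₁ G₂ (.inl e)) (unionState S' T') ↔
      IsEdgeStep S e S' ∧ T' = T := by
  rw [← fst_eq_and_isMerge_iff, IsEdgeStep, IsEdgeStep, isMerge_unionState_iff, fst_unionState,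
    fst_unionState, insert_inl_unionEdges, unionEdges_inj, edgeEquiv_mem_unionEdges,
    Finset.inl_mem_disjSum]
  tauto

theorem isEdgeStep_unionState_inr_iff {S S' : G₁.EState} {T T' : G₂.EState} {e : Fin G₂.n} :
    IsEdgeStep (unionState S T) (edgeEquiv G₁ G₂ (.inr e)) (unionState S' T') ↔
      S' = S ∧ IsEdgeStep T e T' := by
  rw [← fst_eq_and_isMerge_iff, IsEdgeStep, IsEdgeStep, isMerge_unionState_iff, fst_unionState,
    fst_unionState, insert_inr_unionEdges, unionEdges_inj, edgeEquiv_mem_unionEdges,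
    Finset.inr_mem_disjSum]
  tauto

theorem bidegree_unionState (S : G₁.EState) (T : G₂.EState) :
    (disj G₁ G₂).bidegree (unionState S T) = G₁.bidegree S + G₂.bidegree T := by
  rw [bidegree, jdeg_unionState, fst_unionState, card_unionEdges, Nat.cast_add, Nat.cast_add]
  rfl

/-- The sign `(-1) ^ i` of the bidegree `(i, j)`. -/
def degreeSign (m : ℤ × ℤ) : ℚ := (-1) ^ m.1

theorem degreeSign_mul_self (m : ℤ × ℤ) : degreeSign m * degreeSign m = 1 := by
  rw [degreeSign, ← mul_zpow, neg_one_mul, neg_neg, one_zpow]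

theorem degreeSign_add_one_zero (m : ℤ × ℤ) : degreeSign (m + (1, 0)) = -degreeSign m := by
  rw [degreeSign, Prod.fst_add, zpow_add_one₀ (by norm_num), mul_neg_one, degreeSign]

open scoped TensorProduct

theorem edgeMatrix_edgeEquiv_inl (e : Fin G₁.n) :
    (disj G₁ G₂).edgeMatrix (edgeEquiv G₁ G₂ (.inl e)) =
      tensorMatrixEquiv ℚ (stateEquiv G₁ G₂) (G₁.edgeMatrix e ⊗ₜ 1) := by
  ext U' U
  obtain ⟨⟨S, T⟩, rfl⟩ := (stateEquiv G₁ G₂).surjective U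
  obtain ⟨⟨S', T'⟩, rfl⟩ := (stateEquiv G₁ G₂).surjective U'
  rw [tensorMatrixEquiv_tmul_apply]
  change (disj G₁ G₂).edgeMatrix _ (unionState S' T') (unionState S T) =
    G₁.edgeMatrix e S' S * (1 : Matrix G₂.EState G₂.EState ℚ) T' T
  simp only [edgeMatrix, Matrix.of_apply, fst_unionState, edgeSign_unionEdges_inl,
    Matrix.one_apply, ite_zero_mul_ite_zero, mul_one]
  classical
  exact if_congr isEdgeStep_unionState_inl_iff rfl rfl

theorem edgeMatrix_edgeEquiv_inr (e : Fin G₂.n) :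
    (disj G₁ G₂).edgeMatrix (edgeEquiv G₁ G₂ (.inr e)) =
      tensorMatrixEquiv ℚ (stateEquiv G₁ G₂)
        (Matrix.diagonal (degreeSign ∘ G₁.bidegree) ⊗ₜ G₂.edgeMatrix e) := by
  ext U' U
  obtain ⟨⟨S, T⟩, rfl⟩ := (stateEquiv G₁ G₂).surjective U
  obtain ⟨⟨S', T'⟩, rfl⟩ := (stateEquiv G₁ G₂).surjective U'
  rw [tensorMatrixEquiv_tmul_apply]
  change (disj G₁ G₂).edgeMatrix _ (unionState S' T') (unionState S T) =
    Matrix.diagonal (degreeSign ∘ G₁.bidegree) S' S * G₂.edgeMatrix e T' T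
  simp only [edgeMatrix, Matrix.of_apply, fst_unionState, edgeSign_unionEdges_inr,
    Matrix.diagonal_apply, ite_zero_mul_ite_zero]
  classical
  rw [if_congr isEdgeStep_unionState_inr_iff rfl rfl]
  split_ifs with hstep
  · simp [hstep.1, degreeSign, bidegree]
  · rfl

theorem coefficientMatrix_diff_disj :
    coefficientMatrix ℚ (disj G₁ G₂).diff =
      tensorMatrixEquiv ℚ (stateEquiv G₁ G₂)
        (tensorDifferential ℚ (Matrix.diagonal (degreeSign ∘ G₁.bidegree))
          (coefficientMatrix ℚ G₁.diff) (coefficientMatrix ℚ G₂.diff)) := by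
  simp only [coefficientMatrix_diff, tensorDifferential, ← (edgeEquiv G₁ G₂).sum_comp,
    Fintype.sum_sum_type, edgeMatrix_edgeEquiv_inl, edgeMatrix_edgeEquiv_inr,
    TensorProduct.sum_tmul, TensorProduct.tmul_sum, map_add, map_sum]

end DisjointUnion

theorem exists_isSplitting (G : OGraph) :
    ∃ h, IsHomogeneousMatrix G.bidegree (-(1, 0)) h ∧
      IsSplitting (coefficientMatrix ℚ G.diff) h :=
  G.isHomogeneousMatrix_diff.exists_isSplitting G.coefficientMatrix_diff_mul_self

theorem exists_isSplitting_disj {G₁ G₂ : OGraph}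
    {h₁ : Matrix G₁.EState G₁.EState ℚ} {h₂ : Matrix G₂.EState G₂.EState ℚ}
    (hh₁ : IsHomogeneousMatrix G₁.bidegree (-(1, 0)) h₁)
    (hh₂ : IsHomogeneousMatrix G₂.bidegree (-(1, 0)) h₂)
    (hs₁ : IsSplitting (coefficientMatrix ℚ G₁.diff) h₁)
    (hs₂ : IsSplitting (coefficientMatrix ℚ G₂.diff) h₂) :
    ∃ h, IsHomogeneousMatrix (disj G₁ G₂).bidegree (-(1, 0)) h ∧
      IsSplitting (coefficientMatrix ℚ (disj G₁ G₂).diff) h ∧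
      ∀ S T, homotopyDefect (coefficientMatrix ℚ (disj G₁ G₂).diff) h
        (unionState S T) (unionState S T) =
          homotopyDefect (coefficientMatrix ℚ G₁.diff) h₁ S S *
            homotopyDefect (coefficientMatrix ℚ G₂.diff) h₂ T T := by
  obtain ⟨h, hh, hs, hdefect⟩ := hs₁.exists_isSplitting_tensor hs₂ G₁.isHomogeneousMatrix_diff
    hh₁ hh₂ (fun p => bidegree_unionState p.1 p.2) degreeSign_mul_self degreeSign_add_one_zero
    coefficientMatrix_diff_disj
  exact ⟨h, hh, hs, fun S T => hdefect (S, T)⟩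

end OGraph

/-- the Poincaré polynomial is multiplicative under disjoint
union: `R_{G₁ ⊔ G₂}(t,q) = R_{G₁}(t,q) · R_{G₂}(t,q)`. -/
theorem Rpoly_disjoint_union (G₁ G₂ : OGraph) :
    (OGraph.disj G₁ G₂).Rpoly = G₁.Rpoly * G₂.Rpoly := by
  obtain ⟨h₁, hh₁, hs₁⟩ := G₁.exists_isSplitting
  obtain ⟨h₂, hh₂, hs₂⟩ := G₂.exists_isSplitting
  obtain ⟨h, hh, hs, hdefect⟩ := OGraph.exists_isSplitting_disj hh₁ hh₂ hs₁ hs₂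
  apply Polynomial.map_injective _ (PowerSeries.map_injective _ (Int.castRingHom ℚ).injective_int)
  rw [Polynomial.map_mul, OGraph.map_Rpoly _ hh hs, OGraph.map_Rpoly _ hh₁ hs₁,
    OGraph.map_Rpoly _ hh₂ hs₂, ← (OGraph.stateEquiv G₁ G₂).sum_comp, Fintype.sum_prod_type,
    Finset.sum_mul_sum]
  refine Finset.sum_congr rfl fun S _ => Finset.sum_congr rfl fun T _ => ?_
  rw [Polynomial.monomial_mul_monomial, PowerSeries.monomial_mul_monomial, ← hdefect,
    ← OGraph.jdeg_unionState, ← OGraph.card_unionEdges]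
  rfl
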